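/- Let Q ∈ L²_unif(ℝ) and τ ∈ L¹_unif(ℝ) be real-valued, K := 2(‖Q‖_{L²_unif(ℝ)} + ‖τ‖_{L¹_unif(ℝ)}), and for u ∈ H¹(ℝ) define t[u] := ∫_ℝ |u'(x)|² dx − ∫_ℝ Q(x)( conj(u'(x)) u(x) + conj(u(x)) u'(x) ) dx + ∫_ℝ τ(x) |u(x)|² dx. Then for every u ∈ H¹(ℝ): t[u] ≥ m(K) ‖u‖²_{L²(ℝ)}, where m(K) = −4K if 0 ≤ K < 1/2 and m(K) = −32K⁴ if K ≥ 1/2. In particular the self-adjoint operator S(q) with real distributional potential q = Q' + τ is bounded below by m(K). -/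

import Mathlib

open MeasureTheory

/-- The Stepanov `L²_unif` norm: `(sup_t ∫_t^{t+1} |Q|²)^{1/2}`. -/
noncomputable def stepL2 (Q : ℝ → ℂ) : ℝ :=
  Real.sqrt (⨆ t : ℝ, ∫ s in t..(t + 1), ‖Q s‖ ^ 2)

/-- The Stepanov `L¹_unif` norm: `sup_t ∫_t^{t+1} |τ|`. -/
noncomputable def stepL1 (τ : ℝ → ℂ) : ℝ :=
  ⨆ t : ℝ, ∫ s in t..(t + 1), ‖τ s‖

/-- Membership in the Stepanov space `L²_unif(ℝ)`: locally square integrable with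
finite Stepanov norm. -/
def InStepL2 (Q : ℝ → ℂ) : Prop :=
  AEStronglyMeasurable Q volume ∧
  LocallyIntegrable (fun s => ‖Q s‖ ^ 2) volume ∧
  BddAbove (Set.range fun t : ℝ => ∫ s in t..(t + 1), ‖Q s‖ ^ 2)

/-- Membership in the Stepanov space `L¹_unif(ℝ)`: locally integrable with
finite Stepanov norm. -/
def InStepL1 (τ : ℝ → ℂ) : Prop :=
  LocallyIntegrable τ volume ∧
  BddAbove (Set.range fun t : ℝ => ∫ s in t..(t + 1), ‖τ s‖)

/-- `u ∈ H¹(ℝ)` with derivative `u'`: `u` is absolutely continuous with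
`u x = u 0 + ∫_0^x u'`, and both `u` and `u'` are square integrable. -/
def InH1 (u u' : ℝ → ℂ) : Prop :=
  LocallyIntegrable u' volume ∧
  (∀ x : ℝ, u x = u 0 + ∫ s in (0:ℝ)..x, u' s) ∧
  MemLp u 2 volume ∧ MemLp u' 2 volume

/-- The constant `K = 2(‖Q‖_{L²_unif} + ‖τ‖_{L¹_unif})`. -/
noncomputable def Kc (Q τ : ℝ → ℂ) : ℝ := 2 * (stepL2 Q + stepL1 τ)

/-- The sesquilinear form `t[u] = ‖u'‖² - ∫ Q (conj(u')u + conj(u)u') + ∫ τ|u|²`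
associated with the Schrödinger operator with potential `q = Q' + τ`. -/
noncomputable def tform (Q τ u u' : ℝ → ℂ) : ℂ :=
  (Complex.ofReal (∫ x : ℝ, ‖u' x‖ ^ 2))
    - (∫ x : ℝ, Q x * ((starRingEnd ℂ) (u' x) * u x + (starRingEnd ℂ) (u x) * u' x))
    + ∫ x : ℝ, τ x * (‖u x‖ : ℂ) ^ 2

/-- Cauchy-Schwarz on an interval. -/
lemma aux_cs {f : ℝ → ℝ} {s l : ℝ} (hl : 0 < l)
    (hf : IntervalIntegrable f volume s (s + l))
    (hf2 : IntervalIntegrable (fun x => f x ^ 2) volume s (s + l)) :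
    (∫ x in s..(s + l), f x) ^ 2 ≤ l * ∫ x in s..(s + l), f x ^ 2 := by
  set I := ∫ x in s..(s + l), f x with hI
  have h : ∫ x in s..(s + l), 2 * (I / l) * f x ≤
      ∫ x in s..(s + l), (f x ^ 2 + (I / l) ^ 2) := by
    apply intervalIntegral.integral_mono (by linarith) (hf.const_mul _) (hf2.add (by simp))
    intro x
    simp only
    nlinarith [sq_nonneg (f x - I / l)]
  rw [intervalIntegral.integral_const_mul, intervalIntegral.integral_add hf2 (by simp),
    intervalIntegral.integral_const, ← hI] at h
  simp only [add_sub_cancel_left, smul_eq_mul] at h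
  have h1 : l * (2 * (I / l) * I) = 2 * I ^ 2 := by field_simp
  have h2 : l * (l * (I / l) ^ 2) = I ^ 2 := by field_simp
  nlinarith [mul_le_mul_of_nonneg_left h hl.le]

lemma aux_cont {u u' : ℝ → ℂ} (hu : InH1 u u') : Continuous u := by
  have : u = fun x => u 0 + ∫ s in (0:ℝ)..x, u' s := funext hu.2.1
  rw [this]
  exact continuous_const.add
    (intervalIntegral.continuous_primitive (fun a b => (hu.1.integrableOn_isCompact
      isCompact_uIcc).intervalIntegrable) 0)

lemma aux_sup {u u' : ℝ → ℂ} (hu : InH1 u u') {s l : ℝ} (hl : 0 < l) {x : ℝ}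
    (hx : x ∈ Set.Icc s (s + l)) :
    ‖u x‖ ^ 2 ≤ 2 / l * (∫ y in s..(s + l), ‖u y‖ ^ 2) +
      2 * l * ∫ y in s..(s + l), ‖u' y‖ ^ 2 := by
  have hint : ∀ a b, IntervalIntegrable u' volume a b := fun a b =>
    (hu.1.integrableOn_isCompact isCompact_uIcc).intervalIntegrable
  have h2 : IntervalIntegrable (fun y => ‖u' y‖ ^ 2) volume s (s + l) :=
    ((memLp_two_iff_integrable_sq_norm hu.2.2.2.1).1 hu.2.2.2).intervalIntegrable
  set A := ∫ y in s..(s + l), ‖u' y‖ ^ 2 with hA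
  have hcs := aux_cs hl (hint s (s + l)).norm h2
  have hc := aux_cont hu
  have hpt : ∀ y ∈ Set.Icc s (s + l), ‖u x‖ ^ 2 ≤ 2 * ‖u y‖ ^ 2 + 2 * (l * A) := by
    intro y hy
    have hd : u x - u y = ∫ t in y..x, u' t := by
      rw [hu.2.1 x, hu.2.1 y, add_sub_add_left_eq_sub,
        intervalIntegral.integral_interval_sub_left (hint _ _) (hint _ _)]
    have hn : ‖u x - u y‖ ≤ ∫ t in s..(s + l), ‖u' t‖ := by
      rw [hd]
      refine (intervalIntegral.norm_integral_le_integral_norm_uIoc).trans ?_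
      rw [intervalIntegral.integral_of_le (by linarith)]
      apply setIntegral_mono_set
      · exact (hint s (s + l)).norm.1
      · exact Filter.Eventually.of_forall fun _ => norm_nonneg _
      · have hsub : Set.uIoc y x ⊆ Set.Ioc s (s + l) := ?_
        · exact hsub.eventuallyLE
        intro t ht
        rcases Set.mem_uIoc.1 ht with ht | ht
        · exact ⟨by linarith [hy.1, ht.1], by linarith [hx.2, ht.2]⟩
        · exact ⟨by linarith [hx.1, ht.1], by linarith [hy.2, ht.2]⟩
    have htri : ‖u x‖ ≤ ‖u y‖ + ‖u x - u y‖ := by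
      have := norm_add_le (u y) (u x - u y)
      simpa using this
    have h3 : ‖u x - u y‖ ^ 2 ≤ l * A :=
      (pow_le_pow_left₀ (norm_nonneg _) hn 2).trans hcs
    nlinarith [sq_nonneg (‖u y‖ - ‖u x - u y‖), norm_nonneg (u x), norm_nonneg (u y),
      norm_nonneg (u x - u y)]
  have hci : IntervalIntegrable (fun y => 2 * ‖u y‖ ^ 2) volume s (s + l) :=
    (by fun_prop : Continuous fun y => 2 * ‖u y‖ ^ 2).intervalIntegrable _ _
  have h := intervalIntegral.integral_mono_on (μ := volume) (by linarith : s ≤ s + l)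
    (f := fun _ => ‖u x‖ ^ 2) (g := fun y => 2 * ‖u y‖ ^ 2 + 2 * (l * A)) (by simp)
    (hci.add (by simp)) hpt
  rw [intervalIntegral.integral_add hci (by simp), intervalIntegral.integral_const_mul,
    intervalIntegral.integral_const, intervalIntegral.integral_const] at h
  simp only [add_sub_cancel_left, smul_eq_mul] at h
  have h4 : 2 / l * (∫ y in s..(s + l), ‖u y‖ ^ 2) + 2 * l * A =
    (2 * (∫ y in s..(s + l), ‖u y‖ ^ 2) + l * (2 * (l * A))) / l := by field_simp
  rw [h4, le_div_iff₀ hl]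
  linarith

lemma aux_weight {u u' : ℝ → ℂ} (hu : InH1 u u') {W : ℝ → ℝ} (hW0 : ∀ x, 0 ≤ W x)
    (hW : LocallyIntegrable W volume) {M : ℝ}
    (hM : ∀ t : ℝ, ∫ x in t..(t + 1), W x ≤ M) {l : ℝ} (hl : 0 < l) (hl1 : l ≤ 1) :
    Integrable (fun x => W x * ‖u x‖ ^ 2) ∧
    ∫ x, W x * ‖u x‖ ^ 2 ≤
      M * (2 / l * (∫ y, ‖u y‖ ^ 2) + 2 * l * ∫ y, ‖u' y‖ ^ 2) := by
  have hu2 : Integrable (fun y => ‖u y‖ ^ 2) :=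
    (memLp_two_iff_integrable_sq_norm hu.2.2.1.1).1 hu.2.2.1
  have hu2' : Integrable (fun y => ‖u' y‖ ^ 2) :=
    (memLp_two_iff_integrable_sq_norm hu.2.2.2.1).1 hu.2.2.2
  have hM0 : 0 ≤ M := (intervalIntegral.integral_nonneg (by norm_num)
    (fun x _ => hW0 x)).trans (hM 0)
  have hloc : ∀ s : ℝ, ∫⁻ x in Set.Ioc s (s + l), ENNReal.ofReal (W x * ‖u x‖ ^ 2) ≤
      ENNReal.ofReal (M * (2 / l)) * (∫⁻ x in Set.Ioc s (s + l), ENNReal.ofReal (‖u x‖ ^ 2)) +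
      ENNReal.ofReal (M * (2 * l)) * (∫⁻ x in Set.Ioc s (s + l), ENNReal.ofReal (‖u' x‖ ^ 2)) := by
    intro s
    rw [← ofReal_integral_eq_lintegral_ofReal hu2.integrableOn
        (Filter.Eventually.of_forall fun _ => by positivity),
      ← ofReal_integral_eq_lintegral_ofReal hu2'.integrableOn
        (Filter.Eventually.of_forall fun _ => by positivity),
      ← ENNReal.ofReal_mul (by positivity), ← ENNReal.ofReal_mul (by positivity),
      ← ENNReal.ofReal_add (by positivity) (by positivity)]
    set S := 2 / l * (∫ y in s..(s + l), ‖u y‖ ^ 2) +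
      2 * l * ∫ y in s..(s + l), ‖u' y‖ ^ 2 with hS
    have hWi : ∀ a b, IntegrableOn W (Set.Ioc a b) := fun a b =>
      (hW.integrableOn_isCompact (isCompact_Icc (a := a) (b := b))).mono_set Set.Ioc_subset_Icc_self
    have hWM : ∫ x in Set.Ioc s (s + l), W x ≤ M := by
      refine le_trans ?_ (hM s)
      rw [intervalIntegral.integral_of_le (by linarith)]
      exact setIntegral_mono_set (hWi _ _) (Filter.Eventually.of_forall hW0)
        (Set.Ioc_subset_Ioc_right (by linarith)).eventuallyLE
    have hS0 : 0 ≤ S := le_trans (by positivity) (aux_sup hu hl (x := s) ⟨le_rfl, by linarith⟩)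
    calc ∫⁻ x in Set.Ioc s (s + l), ENNReal.ofReal (W x * ‖u x‖ ^ 2)
        ≤ ∫⁻ x in Set.Ioc s (s + l), ENNReal.ofReal (W x * S) := by
          apply setLIntegral_mono' measurableSet_Ioc
          intro x hx
          exact ENNReal.ofReal_le_ofReal (mul_le_mul_of_nonneg_left
            (aux_sup hu hl (Set.Ioc_subset_Icc_self hx)) (hW0 x))
      _ = ENNReal.ofReal (∫ x in Set.Ioc s (s + l), W x * S) := by
          rw [ofReal_integral_eq_lintegral_ofReal ((hWi _ _).mul_const S)
            (Filter.Eventually.of_forall fun x => mul_nonneg (hW0 x) hS0)]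
      _ ≤ _ := by
          apply ENNReal.ofReal_le_ofReal
          rw [integral_mul_const]
          refine (mul_le_mul_of_nonneg_right hWM hS0).trans (le_of_eq ?_)
          rw [hS, intervalIntegral.integral_of_le (by linarith : s ≤ s + l),
            intervalIntegral.integral_of_le (by linarith : s ≤ s + l)]
          ring
  have hsplit : ∀ f : ℝ → ENNReal, ∫⁻ x, f x =
      ∑' n : ℤ, ∫⁻ x in Set.Ioc (n • l) (n • l + l), f x := by
    intro f
    have h1 : ∀ n : ℤ, Set.Ioc (n • l) (n • l + l) = Set.Ioc (n • l) ((n + 1) • l) := by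
      intro n; rw [add_smul, one_smul]
    simp_rw [h1]
    rw [← lintegral_iUnion (fun n => measurableSet_Ioc) (Set.pairwise_disjoint_Ioc_zsmul l),
      iUnion_Ioc_zsmul hl, Measure.restrict_univ]
  have hglob : ∫⁻ x, ENNReal.ofReal (W x * ‖u x‖ ^ 2) ≤
      ENNReal.ofReal (M * (2 / l * (∫ y, ‖u y‖ ^ 2) + 2 * l * ∫ y, ‖u' y‖ ^ 2)) := by
    have : ENNReal.ofReal (M * (2 / l * (∫ y, ‖u y‖ ^ 2) + 2 * l * ∫ y, ‖u' y‖ ^ 2)) =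
      ENNReal.ofReal (M * (2 / l)) * (∫⁻ x, ENNReal.ofReal (‖u x‖ ^ 2)) +
      ENNReal.ofReal (M * (2 * l)) * (∫⁻ x, ENNReal.ofReal (‖u' x‖ ^ 2)) := by
      rw [← ofReal_integral_eq_lintegral_ofReal hu2
        (Filter.Eventually.of_forall fun _ => by positivity),
        ← ofReal_integral_eq_lintegral_ofReal hu2'
        (Filter.Eventually.of_forall fun _ => by positivity),
        ← ENNReal.ofReal_mul (by positivity), ← ENNReal.ofReal_mul (by positivity),
        ← ENNReal.ofReal_add (by positivity) (by positivity)]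
      congr 1; ring
    rw [this, hsplit, hsplit (fun x => ENNReal.ofReal (‖u x‖ ^ 2)),
      hsplit (fun x => ENNReal.ofReal (‖u' x‖ ^ 2)), ← ENNReal.tsum_mul_left,
      ← ENNReal.tsum_mul_left, ← ENNReal.tsum_add]
    exact ENNReal.tsum_le_tsum fun n => hloc _
  have hnn : ∀ x, 0 ≤ W x * ‖u x‖ ^ 2 := fun x => mul_nonneg (hW0 x) (by positivity)
  have hmeas : AEStronglyMeasurable (fun x => W x * ‖u x‖ ^ 2) volume :=
    hW.aestronglyMeasurable.mul hu2.aestronglyMeasurable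
  have hi : Integrable (fun x => W x * ‖u x‖ ^ 2) := by
    refine ⟨hmeas, ?_⟩
    rw [hasFiniteIntegral_iff_ofReal (Filter.Eventually.of_forall hnn)]
    exact hglob.trans_lt ENNReal.ofReal_lt_top
  refine ⟨hi, ?_⟩
  rw [← ofReal_integral_eq_lintegral_ofReal hi (Filter.Eventually.of_forall hnn)] at hglob
  exact (ENNReal.ofReal_le_ofReal_iff (by positivity)).1 hglob

lemma aux_main {Q τ u u' : ℝ → ℂ} (hQ : InStepL2 Q) (hτ : InStepL1 τ) (hu : InH1 u u')
    {l d : ℝ} (hl : 0 < l) (hl1 : l ≤ 1) (hd : 0 < d) :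
    (∫ x, ‖u' x‖ ^ 2) - d * (∫ x, ‖u' x‖ ^ 2) - (d⁻¹ * stepL2 Q ^ 2 + stepL1 τ) *
      (2 / l * (∫ y, ‖u y‖ ^ 2) + 2 * l * ∫ y, ‖u' y‖ ^ 2) ≤ (tform Q τ u u').re := by
  have hu2' : Integrable (fun y => ‖u' y‖ ^ 2) :=
    (memLp_two_iff_integrable_sq_norm hu.2.2.2.1).1 hu.2.2.2
  have ha : stepL2 Q ^ 2 = ⨆ t : ℝ, ∫ s in t..(t + 1), ‖Q s‖ ^ 2 := by
    refine Real.sq_sqrt (Real.iSup_nonneg fun t => ?_)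
    exact intervalIntegral.integral_nonneg (by linarith) fun x _ => by positivity
  obtain ⟨i1, h1⟩ := aux_weight hu (W := fun x => ‖Q x‖ ^ 2) (fun x => by positivity) hQ.2.1
    (M := stepL2 Q ^ 2) (fun t => ha ▸ le_ciSup hQ.2.2 t) hl hl1
  obtain ⟨i2, h2⟩ := aux_weight hu (W := fun x => ‖τ x‖) (fun x => by positivity) (fun x => (hτ.1 x).norm)
    (M := stepL1 τ) (fun t => le_ciSup hτ.2 t) hl hl1
  have e1 : ‖∫ x : ℝ, Q x * ((starRingEnd ℂ) (u' x) * u x + (starRingEnd ℂ) (u x) * u' x)‖ ≤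
      ∫ x, (d * ‖u' x‖ ^ 2 + d⁻¹ * (‖Q x‖ ^ 2 * ‖u x‖ ^ 2)) := by
    refine norm_integral_le_of_norm_le ((hu2'.const_mul d).add (i1.const_mul d⁻¹))
      (Filter.Eventually.of_forall fun x => ?_)
    have : ‖(starRingEnd ℂ) (u' x) * u x + (starRingEnd ℂ) (u x) * u' x‖ ≤
        2 * (‖u' x‖ * ‖u x‖) := by
      refine (norm_add_le _ _).trans (le_of_eq ?_)
      simp only [norm_mul, RCLike.norm_conj]; ring
    rw [norm_mul]
    refine (mul_le_mul_of_nonneg_left this (norm_nonneg _)).trans ?_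
    have h3 : d * ‖u' x‖ ^ 2 + d⁻¹ * (‖Q x‖ ^ 2 * ‖u x‖ ^ 2) - ‖Q x‖ * (2 * (‖u' x‖ * ‖u x‖))
      = d⁻¹ * (d * ‖u' x‖ - ‖Q x‖ * ‖u x‖) ^ 2 := by field_simp; ring
    have h4 : 0 ≤ d⁻¹ * (d * ‖u' x‖ - ‖Q x‖ * ‖u x‖) ^ 2 := by positivity
    linarith
  rw [integral_add (hu2'.const_mul d) (i1.const_mul d⁻¹), integral_const_mul,
    integral_const_mul] at e1
  have e2 : ‖∫ x : ℝ, τ x * (‖u x‖ : ℂ) ^ 2‖ ≤ ∫ x, ‖τ x‖ * ‖u x‖ ^ 2 := by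
    refine norm_integral_le_of_norm_le i2 (Filter.Eventually.of_forall fun x => ?_)
    simp
  have h5 := mul_le_mul_of_nonneg_left h1 (inv_nonneg.2 hd.le)
  unfold tform
  rw [Complex.add_re, Complex.sub_re, Complex.ofReal_re]
  have r1 := (abs_le.1 (Complex.abs_re_le_norm
    (∫ x : ℝ, Q x * ((starRingEnd ℂ) (u' x) * u x + (starRingEnd ℂ) (u x) * u' x)))).2
  have r2 := (abs_le.1 (Complex.abs_re_le_norm (∫ x : ℝ, τ x * (‖u x‖ : ℂ) ^ 2))).1
  linarith

/-- Lower bound for real potentials: if `Q` and `τ` are real-valued then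
`t[u] ≥ m(K)‖u‖²` where `m(K) = -4K` for `0 ≤ K < 1/2` and `m(K) = -32K⁴` for `K ≥ 1/2`;
i.e. the self-adjoint operator `S(q)`, `q = Q' + τ`, is bounded below by `m(K)`. -/
theorem tform_lower_bound_real (Q τ u u' : ℝ → ℂ)
    (hQ : InStepL2 Q) (hτ : InStepL1 τ)
    (hQreal : ∀ x, (Q x).im = 0) (hτreal : ∀ x, (τ x).im = 0)
    (hu : InH1 u u') :
    (if Kc Q τ < 1 / 2 then -4 * Kc Q τ else -32 * Kc Q τ ^ 4) * (∫ x : ℝ, ‖u x‖ ^ 2)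
      ≤ (tform Q τ u u').re := by
  have hA : 0 ≤ ∫ x, ‖u' x‖ ^ 2 := integral_nonneg fun x => by positivity
  have hB : 0 ≤ ∫ x, ‖u x‖ ^ 2 := integral_nonneg fun x => by positivity
  have ha : 0 ≤ stepL2 Q := Real.sqrt_nonneg _
  have hb : 0 ≤ stepL1 τ := Real.iSup_nonneg fun t =>
    intervalIntegral.integral_nonneg (by linarith) fun x _ => by positivity
  have hmain := fun (l d : ℝ) (hl : 0 < l) (hl1 : l ≤ 1) (hd : 0 < d) =>
    aux_main hQ hτ hu hl hl1 hd
  unfold Kc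
  generalize stepL2 Q = a at *
  generalize stepL1 τ = b at *
  generalize (∫ x, ‖u' x‖ ^ 2) = A at *
  generalize (∫ x, ‖u x‖ ^ 2) = B at *
  split_ifs with hK
  · refine le_trans ?_ (hmain 1 (1 / 4) one_pos le_rfl (by norm_num))
    have hM : ((1 / 4 : ℝ)⁻¹ * a ^ 2 + b) ≤ a + b := by nlinarith
    have h1 := mul_le_mul_of_nonneg_right hM (by positivity : 0 ≤ 2 / 1 * B + 2 * 1 * A)
    have h2 : (a + b) * A ≤ 1 / 4 * A := mul_le_mul_of_nonneg_right (by linarith) hA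
    have h3 : 0 ≤ (a + b) * B := by positivity
    linarith
  · push Not at hK
    obtain ⟨c, hc⟩ : ∃ c, c = a + b := ⟨_, rfl⟩
    have hc4 : 1 / 4 ≤ c := by linarith
    have hc0 : 0 < c := by linarith
    have hl1 : 1 / (24 * c ^ 2) ≤ 1 := by
      rw [div_le_one (by positivity)]; nlinarith
    refine le_trans ?_ (hmain (1 / (24 * c ^ 2)) (1 / 2) (by positivity) hl1 (by norm_num))
    have hM : ((1 / 2 : ℝ)⁻¹ * a ^ 2 + b) ≤ 6 * c ^ 2 := by
      have : a ^ 2 ≤ c ^ 2 := pow_le_pow_left₀ ha (by linarith) 2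
      nlinarith
    have h1 := mul_le_mul_of_nonneg_right hM
      (by positivity : 0 ≤ 2 / (1 / (24 * c ^ 2)) * B + 2 * (1 / (24 * c ^ 2)) * A)
    have h2 : 6 * c ^ 2 * (2 / (1 / (24 * c ^ 2)) * B + 2 * (1 / (24 * c ^ 2)) * A) =
      288 * c ^ 4 * B + 1 / 2 * A := by field_simp; ring
    have h3 : 0 ≤ c ^ 4 * B := by positivity
    rw [← hc]
    nlinarith
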